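/- Let n ≥ 1, let μ = (-1)^n, let Δ_n be the n×n complex matrix with (i,j) entry μ^i·(−μ)^{j−1}·C(j−1, n−i) for 1 ≤ i, j ≤ n, and let R denote the n×n reversed identity matrix. A 2n×2n complex matrix X satisfies X·H_{2n}(μ) + H_{2n}(μ)·Xᵀ = 0 if and only if X = [[−Dᵀ, B],[C, D]] in n×n blocks, where D = Σ_{k=0}^{n−1} d_k·J_n(μ)^k for some complex numbers d_0,…,d_{n−1}, B = Δ_n·Σ_{ℓ=0}^{⌈n/2⌉−1} α_ℓ·(J_n(μ)^ℓ + J_n(μ)^{n−1−ℓ}) for some complex numbers α_ℓ, and C = R·(Δ_n·Σ_{ℓ=0}^{⌈n/2⌉−1} β_ℓ·(J_n(μ)^ℓ + J_n(μ)^{n−1−ℓ}))·R for some complex numbers β_ℓ. -/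

import Mathlib

/-!
Write `J = J_n(μ)` and `X = [[A, B], [C, D]]`. Blockwise, the equation says `A = -Dᵀ`, `D J = J D`,
`Bᵀ = -B J` and `C = -J Cᵀ`. The commutant of `J` consists of the polynomials in `J`
(`commute_iff`), and conjugation by the reversed identity, which carries `J` to `Jᵀ`, turns the
equation for `C` into the one for `B`. So everything rests on solving `Bᵀ = -B J`.

Applying this equation twice gives `B = Jᵀ B J`. The matrix `Δ` satisfies `Jᵀ Δ J = Δ`
(Pascal's rule, `Delta_congr`), and a solution of `Jᵀ M J = M` is determined by its last row
(`eq_zero_of_congr`). The last row `v` of `Δ` satisfies `v J = e₀`, and `e₀ P` is an arbitrary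
row as `P` runs through the polynomials in `J`; hence `B = Δ P` with `P` a polynomial in `J`.
The same uniqueness gives `Δᵀ = -Δ Jⁿ` (`Delta_transpose`). Since `(Jᵏ)ᵀ Δ Jⁿ = Δ Jⁿ⁻ᵏ`, the
equation for `B = Δ ∑ pₖ Jᵏ` becomes the palindromic condition `∑ pₖ Jⁿ⁻¹⁻ᵏ = ∑ pₖ Jᵏ`, and
averaging the two sides writes `P` in terms of the matrices `Jᵏ + Jⁿ⁻¹⁻ᵏ`.
-/

open Matrix BigOperators Finset

noncomputable section

/-- The `n × n` upper-triangular Jordan block with eigenvalue `μ`: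
`μ` on the diagonal, `1` on the first superdiagonal, `0` elsewhere. -/
def Jmat (n : ℕ) (μ : ℂ) : Matrix (Fin n) (Fin n) ℂ :=
  Matrix.of fun i j => if i = j then μ else if (j : ℕ) = (i : ℕ) + 1 then 1 else 0

/-- The Pascal-type matrix `Δ_n`, whose 1-based `(i,j)` entry is
`μ^i * (−μ)^(j−1) * C(j−1, n−i)` (here indices are 0-based, so shifted by one). -/
def Delta (n : ℕ) (μ : ℂ) : Matrix (Fin n) (Fin n) ℂ :=
  Matrix.of fun i j =>
    μ ^ ((i : ℕ) + 1) * (-μ) ^ (j : ℕ) * ((j : ℕ).choose (n - ((i : ℕ) + 1)) : ℂ)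

/-- The `2n × 2n` block matrix `H_{2n}(μ) = [[0, I],[J_n(μ), 0]]`. -/
def Hmat (n : ℕ) (μ : ℂ) : Matrix (Fin n ⊕ Fin n) (Fin n ⊕ Fin n) ℂ :=
  Matrix.fromBlocks 0 1 (Jmat n μ) 0

/-- The `n × n` reversed identity matrix: `1` on the antidiagonal, `0` elsewhere. -/
def Rev (n : ℕ) : Matrix (Fin n) (Fin n) ℂ :=
  Matrix.of fun i j => if j = i.rev then 1 else 0

section JordanEntries

variable {m : ℕ} (μ : ℂ) (M : Matrix (Fin (m + 1)) (Fin (m + 1)) ℂ)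

lemma mul_J_zero (i : Fin (m + 1)) : (M * Jmat (m + 1) μ) i 0 = μ * M i 0 := by
  rw [Matrix.mul_apply, Finset.sum_eq_single 0]
  · simp [Jmat, mul_comm]
  · intro b _ hb
    simp [Jmat, hb]
  · simp

lemma mul_J_succ (i : Fin (m + 1)) (k : Fin m) :
    (M * Jmat (m + 1) μ) i k.succ = μ * M i k.succ + M i k.castSucc := by
  have h : ∀ b : Fin (m + 1), M i b * Jmat (m + 1) μ b k.succ =
      (if b = k.succ then μ * M i b else 0) + (if b = k.castSucc then M i b else 0) := by
    intro b
    have h1 : (k : ℕ) + 1 = (b : ℕ) + 1 ↔ b = k.castSucc := by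
      rw [Fin.ext_iff]; simp; omega
    have h2 : k.castSucc ≠ k.succ := by simp [Fin.ext_iff]
    simp only [Jmat, Matrix.of_apply, Fin.val_succ, h1]
    by_cases hb : b = k.succ
    · subst hb; simp [h2.symm, mul_comm]
    · simp [hb]
  rw [Matrix.mul_apply]
  simp only [h, Finset.sum_add_distrib, Finset.sum_ite_eq', Finset.mem_univ, if_true]

lemma JT_mul_zero (j : Fin (m + 1)) : ((Jmat (m + 1) μ)ᵀ * M) 0 j = μ * M 0 j := by
  have := mul_J_zero μ Mᵀ j
  rwa [← Matrix.transpose_apply (Mᵀ * _), Matrix.transpose_mul, Matrix.transpose_transpose] at this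

lemma JT_mul_succ (k : Fin m) (j : Fin (m + 1)) :
    ((Jmat (m + 1) μ)ᵀ * M) k.succ j = μ * M k.succ j + M k.castSucc j := by
  have := mul_J_succ μ Mᵀ j k
  rwa [← Matrix.transpose_apply (Mᵀ * _), Matrix.transpose_mul, Matrix.transpose_transpose] at this

lemma J_mul_castSucc (k : Fin m) (j : Fin (m + 1)) :
    (Jmat (m + 1) μ * M) k.castSucc j = μ * M k.castSucc j + M k.succ j := by
  have h : ∀ b : Fin (m + 1), Jmat (m + 1) μ k.castSucc b * M b j =
      (if b = k.castSucc then μ * M b j else 0) + (if b = k.succ then M b j else 0) := by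
    intro b
    have h1 : (b : ℕ) = (k : ℕ) + 1 ↔ b = k.succ := by
      rw [Fin.ext_iff]; simp
    have h2 : k.castSucc ≠ k.succ := by simp [Fin.ext_iff]
    simp only [Jmat, Matrix.of_apply, Fin.val_castSucc, h1]
    by_cases hb : b = k.castSucc
    · subst hb; simp [h2]
    · simp [hb, Ne.symm hb]
  rw [Matrix.mul_apply]
  simp only [h, Finset.sum_add_distrib, Finset.sum_ite_eq', Finset.mem_univ, if_true]

end JordanEntries

/-! ### The commutant of a Jordan block -/

/-- An element of the commutant of `J` is determined by its first row. -/
lemma eq_zero_of_commute {m : ℕ} {μ : ℂ} {D : Matrix (Fin (m + 1)) (Fin (m + 1)) ℂ}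
    (h : D * Jmat (m + 1) μ = Jmat (m + 1) μ * D) (h0 : ∀ j, D 0 j = 0) : D = 0 := by
  have key : ∀ i j, D i j = 0 := by
    intro i
    induction i using Fin.induction with
    | zero => exact h0
    | succ k ih =>
      intro j
      have e := congrFun (congrFun h k.castSucc) j
      rw [J_mul_castSucc] at e
      cases j using Fin.cases with
      | zero =>
        rw [mul_J_zero] at e
        linear_combination -e
      | succ l =>
        rw [mul_J_succ, ih l.castSucc] at e
        linear_combination -e
  ext i j
  exact key i j

lemma J_eq (n : ℕ) (μ : ℂ) : Jmat n μ = μ • (1 : Matrix (Fin n) (Fin n) ℂ) + Jmat n 0 := by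
  ext i j
  by_cases h : i = j
  · subst h; simp [Jmat]
  · simp [Jmat, h]

lemma N_pow_zero_row {m : ℕ} (k : ℕ) (j : Fin (m + 1)) :
    ((Jmat (m + 1) 0) ^ k) 0 j = if (j : ℕ) = k then 1 else 0 := by
  induction k generalizing j with
  | zero =>
    rw [pow_zero, Matrix.one_apply]
    cases j using Fin.cases with
    | zero => simp
    | succ l => simp [(Fin.succ_ne_zero l).symm]
  | succ k ih =>
    rw [pow_succ]
    cases j using Fin.cases with
    | zero => rw [mul_J_zero]; simp
    | succ l => rw [mul_J_succ, ih, ih]; simp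

/-- Every row vector is the first row of a polynomial in `J` of degree less than its size. -/
lemma exists_poly_row {m : ℕ} (μ : ℂ) (c : Fin (m + 1) → ℂ) :
    ∃ d : ℕ → ℂ, ∀ j, (∑ k ∈ range (m + 1), d k • (Jmat (m + 1) μ) ^ k) 0 j = c j := by
  classical
  -- expand `∑ cₖ Nᵏ` with `N = J - μ`, whose first row is `c`, in powers of `J`
  let c' : ℕ → ℂ := fun k => if h : k < m + 1 then c ⟨k, h⟩ else 0
  let p : Polynomial ℂ :=
    ∑ k ∈ range (m + 1), Polynomial.C (c' k) * (Polynomial.X - Polynomial.C μ) ^ k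
  have hdeg : p.natDegree < m + 1 := by
    refine Nat.lt_succ_of_le (Polynomial.natDegree_sum_le_of_forall_le _ _ fun k hk => ?_)
    refine (Polynomial.natDegree_C_mul_le _ _).trans ?_
    rw [Polynomial.natDegree_pow, Polynomial.natDegree_X_sub_C, mul_one]
    have := Finset.mem_range.1 hk
    omega
  refine ⟨p.coeff, fun j => ?_⟩
  rw [← Polynomial.aeval_eq_sum_range' hdeg]
  have hN : Jmat (m + 1) μ - algebraMap ℂ _ μ = Jmat (m + 1) 0 := by
    rw [Algebra.algebraMap_eq_smul_one, J_eq (m + 1) μ]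
    simp
  have : Polynomial.aeval (Jmat (m + 1) μ) p =
      ∑ k ∈ range (m + 1), c' k • (Jmat (m + 1) 0) ^ k := by
    simp only [p, map_sum, map_mul, map_pow, map_sub, Polynomial.aeval_C, Polynomial.aeval_X, hN,
      Algebra.smul_def]
  rw [this, Matrix.sum_apply]
  simp only [Matrix.smul_apply, N_pow_zero_row, smul_eq_mul, mul_ite, mul_one, mul_zero]
  rw [Finset.sum_ite_eq]
  simp only [c', Finset.mem_range, j.2, if_true, dif_pos, Fin.eta]

lemma poly_commute {n : ℕ} (μ : ℂ) (s : Finset ℕ) (d : ℕ → ℂ) :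
    (∑ k ∈ s, d k • (Jmat n μ) ^ k) * Jmat n μ = Jmat n μ * ∑ k ∈ s, d k • (Jmat n μ) ^ k := by
  rw [Finset.sum_mul, Finset.mul_sum]
  refine Finset.sum_congr rfl fun k _ => ?_
  rw [smul_mul_assoc, mul_smul_comm, ← pow_succ, ← pow_succ']

/-- The commutant of `J` consists of the polynomials in `J`. -/
lemma commute_iff {m : ℕ} (μ : ℂ) (D : Matrix (Fin (m + 1)) (Fin (m + 1)) ℂ) :
    D * Jmat (m + 1) μ = Jmat (m + 1) μ * D ↔
      ∃ d : ℕ → ℂ, D = ∑ k ∈ range (m + 1), d k • (Jmat (m + 1) μ) ^ k := by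
  constructor
  · intro h
    obtain ⟨d, hd⟩ := exists_poly_row μ (fun j => D 0 j)
    refine ⟨d, sub_eq_zero.1 (eq_zero_of_commute (μ := μ) ?_ fun j => ?_)⟩
    · rw [sub_mul, mul_sub, h, poly_commute]
    · rw [Matrix.sub_apply, hd, sub_self]
  · rintro ⟨d, rfl⟩
    exact poly_commute μ _ d

/-! ### The congruence equation `Jᵀ M J = M` and the matrix `Δ` -/

/-- A solution of `Jᵀ M J = M` is determined by its last row. -/
lemma eq_zero_of_congr {m : ℕ} {μ : ℂ} (hμ : μ * μ = 1)
    {M : Matrix (Fin (m + 1)) (Fin (m + 1)) ℂ}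
    (h : (Jmat (m + 1) μ)ᵀ * M * Jmat (m + 1) μ = M) (h0 : ∀ j, M (Fin.last m) j = 0) :
    M = 0 := by
  have key : ∀ i j, M i j = 0 := by
    intro i
    induction i using Fin.reverseInduction with
    | last => exact h0
    | cast k ih =>
      intro j
      induction j using Fin.induction with
      | zero =>
        have e := congrFun (congrFun h k.succ) 0
        rw [mul_J_zero, JT_mul_succ, ih] at e
        linear_combination μ * e - M k.castSucc 0 * hμ
      | succ l ihl =>
        have e := congrFun (congrFun h k.succ) l.succ
        rw [mul_J_succ, JT_mul_succ, JT_mul_succ, ih, ih, ihl] at e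
        linear_combination μ * e - M k.castSucc l.succ * hμ
  ext i j
  exact key i j

lemma Delta_congr {m : ℕ} {μ : ℂ} (hμ : μ * μ = 1) :
    (Jmat (m + 1) μ)ᵀ * Delta (m + 1) μ * Jmat (m + 1) μ = Delta (m + 1) μ := by
  ext i j
  cases j using Fin.cases with
  | zero =>
    rw [mul_J_zero]
    cases i using Fin.cases with
    | zero =>
      rw [JT_mul_zero]
      linear_combination Delta (m + 1) μ 0 0 * hμ
    | succ k =>
      rw [JT_mul_succ]
      have : Delta (m + 1) μ k.castSucc 0 = 0 := by
        have : m - (k : ℕ) ≠ 0 := by have := k.2; omega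
        obtain ⟨r, hr⟩ := Nat.exists_eq_succ_of_ne_zero this
        simp [Delta, hr]
      rw [this]
      linear_combination Delta (m + 1) μ k.succ 0 * hμ
  | succ l =>
    rw [mul_J_succ]
    cases i using Fin.cases with
    | zero =>
      rw [JT_mul_zero, JT_mul_zero]
      have : Delta (m + 1) μ 0 l.castSucc = 0 := by
        simp [Delta, Nat.choose_eq_zero_of_lt l.2]
      rw [this]
      linear_combination Delta (m + 1) μ 0 l.succ * hμ
    | succ k =>
      rw [JT_mul_succ, JT_mul_succ]
      suffices h : μ * Delta (m + 1) μ k.castSucc l.succ + μ * Delta (m + 1) μ k.succ l.castSucc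
          + Delta (m + 1) μ k.castSucc l.castSucc = 0 by
        linear_combination h + Delta (m + 1) μ k.succ l.succ * hμ
      simp only [Delta, Matrix.of_apply, Fin.val_succ, Fin.val_castSucc]
      obtain ⟨r, hr⟩ : ∃ r, m = (k : ℕ) + 1 + r := ⟨m - (k + 1), by have := k.2; omega⟩
      have h1 : m + 1 - ((k : ℕ) + 1) = r + 1 := by omega
      have h2 : m + 1 - ((k : ℕ) + 1 + 1) = r := by omega
      rw [h1, h2, Nat.choose_succ_succ]
      push_cast
      simp only [pow_succ]
      linear_combination (-(μ ^ (k : ℕ) * μ * (-μ) ^ (l : ℕ)) *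
        ((l : ℕ).choose (r + 1) : ℂ)) * hμ

lemma Delta_last_row {m : ℕ} {μ : ℂ} (hm : μ ^ m = 1) (j : Fin (m + 1)) :
    Delta (m + 1) μ (Fin.last m) j = μ * (-μ) ^ (j : ℕ) := by
  simp [Delta, pow_succ, hm]

/-- The last row of `Δ J P` is the first row of `P`, because the last row of `Δ J` is `e₀`. -/
lemma Delta_J_mul_last {m : ℕ} {μ : ℂ} (hμ : μ * μ = 1) (hm : μ ^ m = 1)
    (P : Matrix (Fin (m + 1)) (Fin (m + 1)) ℂ) (j : Fin (m + 1)) :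
    (Delta (m + 1) μ * Jmat (m + 1) μ * P) (Fin.last m) j = P 0 j := by
  have h : ∀ k, (Delta (m + 1) μ * Jmat (m + 1) μ) (Fin.last m) k = if k = 0 then 1 else 0 := by
    intro k
    cases k using Fin.cases with
    | zero => rw [mul_J_zero, Delta_last_row hm]; simp [hμ]
    | succ l =>
      rw [mul_J_succ, Delta_last_row hm, Delta_last_row hm]
      simp only [Fin.val_succ, Fin.val_castSucc, Fin.succ_ne_zero, if_false, pow_succ]
      linear_combination (-(μ * (-μ) ^ (l : ℕ))) * hμ
  rw [Matrix.mul_apply]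
  simp [h]

lemma J_pow_zero_row {m : ℕ} {μ : ℂ} (hμ : μ * μ = 1) (k : ℕ) (j : Fin (m + 1)) :
    ((Jmat (m + 1) μ) ^ k) 0 j = (k.choose j : ℂ) * μ ^ (k + (j : ℕ)) := by
  induction k generalizing j with
  | zero =>
    rw [pow_zero, Matrix.one_apply]
    cases j using Fin.cases with
    | zero => simp
    | succ l => simp [(Fin.succ_ne_zero l).symm]
  | succ k ih =>
    rw [pow_succ]
    cases j using Fin.cases with
    | zero => rw [mul_J_zero, ih]; simp [pow_succ, mul_comm]
    | succ l =>
      rw [mul_J_succ, ih, ih]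
      simp only [Fin.val_succ, Fin.val_castSucc, Nat.choose_succ_succ, Nat.cast_add]
      have e1 : k + 1 + ((l : ℕ) + 1) = k + l + 2 := by ring
      have e2 : k + ((l : ℕ) + 1) = k + l + 1 := by ring
      rw [e1, e2, pow_succ, pow_succ]
      linear_combination (-(k.choose (l : ℕ) : ℂ) * μ ^ (k + (l : ℕ))) * hμ

lemma pow_congr {n : ℕ} {J M : Matrix (Fin n) (Fin n) ℂ} (h : Jᵀ * M * J = M) (k : ℕ) :
    (J ^ k)ᵀ * M * J ^ k = M := by
  induction k with
  | zero => simp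
  | succ k ih =>
    calc (J ^ (k + 1))ᵀ * M * J ^ (k + 1) = (J ^ k)ᵀ * (Jᵀ * M * J) * J ^ k := by
          nth_rewrite 1 [pow_succ']
          rw [pow_succ', Matrix.transpose_mul]
          have : (J ^ k)ᵀ = Jᵀ ^ k := Matrix.transpose_pow J k
          rw [this, ← pow_succ, pow_succ]
          simp only [mul_assoc]
      _ = M := by rw [h, ih]

lemma Delta_transpose {m : ℕ} {μ : ℂ} (hμ : μ = (-1) ^ (m + 1)) (h2 : μ * μ = 1)
    (hm : μ ^ m = 1) :
    (Delta (m + 1) μ)ᵀ = -(Delta (m + 1) μ * Jmat (m + 1) μ ^ (m + 1)) := by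
  have hc := Delta_congr (m := m) h2
  rw [← sub_eq_zero, sub_neg_eq_add]
  refine eq_zero_of_congr h2 ?_ fun j => ?_
  · have ht := congrArg Matrix.transpose hc
    rw [Matrix.transpose_mul, Matrix.transpose_mul, Matrix.transpose_transpose] at ht
    rw [mul_add, add_mul, mul_assoc _ _ (Jmat (m + 1) μ), ht]
    congr 1
    rw [← mul_assoc, mul_assoc _ _ (Jmat (m + 1) μ), ← pow_succ, pow_succ', ← mul_assoc, hc]
  · rw [Matrix.add_apply, Matrix.transpose_apply, pow_succ', ← mul_assoc,
      Delta_J_mul_last h2 hm, J_pow_zero_row h2]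
    have hj : (j : ℕ) ≤ m := Nat.lt_succ_iff.1 j.2
    have e : m + 1 - ((j : ℕ) + 1) = m - j := by omega
    simp only [Delta, Matrix.of_apply, Fin.val_last, e]
    rw [Nat.choose_symm hj, neg_pow, pow_add, pow_succ, hm]
    have h3 : (-1 : ℂ) ^ m = -μ := by rw [hμ, pow_succ]; ring
    rw [h3]
    linear_combination (-(μ ^ (j : ℕ)) * (m.choose (j : ℕ) : ℂ)) * h2 +
      (μ ^ (j : ℕ) * (m.choose (j : ℕ) : ℂ)) * hm

/-! ### Solving `Bᵀ = -B J` -/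

/-- A sum against a family invariant under `k ↦ n - 1 - k` folds onto its first half. -/
lemma fold_sum {V : Type*} [AddCommGroup V] [Module ℂ V] (n : ℕ) (a : ℕ → ℂ) (g : ℕ → V)
    (hg : ∀ k < n, g (n - 1 - k) = g k) :
    ∃ α : ℕ → ℂ, ∑ k ∈ range n, a k • g k = ∑ k ∈ range ((n + 1) / 2), α k • g k := by
  -- for odd `n` the middle index is its own reflection and must be counted once
  refine ⟨fun k => a k + if k < n / 2 then a (n - 1 - k) else 0, ?_⟩
  simp only [add_smul, ite_smul, zero_smul, Finset.sum_add_distrib]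
  have hn : n = (n + 1) / 2 + n / 2 := by omega
  conv_lhs => rw [hn, Finset.sum_range_add]
  congr 1
  rw [← Finset.sum_filter]
  have : (range ((n + 1) / 2)).filter (· < n / 2) = range (n / 2) := by
    ext k; simp; omega
  rw [this, ← Finset.sum_range_reflect]
  refine Finset.sum_congr rfl fun k hk => ?_
  have hk := Finset.mem_range.1 hk
  have e : (n + 1) / 2 + (n / 2 - 1 - k) = n - 1 - k := by omega
  rw [e, hg k (by omega)]

lemma pow_transpose_Delta {m : ℕ} {μ : ℂ} (h2 : μ * μ = 1) {k : ℕ} (hk : k ≤ m) :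
    (Jmat (m + 1) μ ^ k)ᵀ * Delta (m + 1) μ * Jmat (m + 1) μ ^ (m + 1) =
      Delta (m + 1) μ * Jmat (m + 1) μ ^ (m - k) * Jmat (m + 1) μ := by
  have e : m + 1 = k + (m - k + 1) := by omega
  conv_lhs => rw [show Jmat (m + 1) μ ^ (m + 1) = Jmat (m + 1) μ ^ (k + (m - k + 1)) by rw [← e],
    pow_add, ← mul_assoc, pow_congr (Delta_congr h2)]
  rw [pow_succ, mul_assoc]

/-- For `P = ∑ pₖ Jᵏ`, transposing `Δ P` replaces `P` by its reflection, up to `-J`. -/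
lemma transpose_Delta_poly {m : ℕ} {μ : ℂ} (hμ : μ = (-1) ^ (m + 1)) (h2 : μ * μ = 1)
    (hm : μ ^ m = 1) (p : ℕ → ℂ) :
    (Delta (m + 1) μ * ∑ k ∈ range (m + 1), p k • Jmat (m + 1) μ ^ k)ᵀ =
      -(Delta (m + 1) μ * (∑ k ∈ range (m + 1), p k • Jmat (m + 1) μ ^ (m - k)) *
        Jmat (m + 1) μ) := by
  rw [Matrix.transpose_mul, Delta_transpose hμ h2 hm, mul_neg, ← mul_assoc, Matrix.transpose_sum,
    Finset.sum_mul, Finset.sum_mul, Finset.mul_sum, Finset.sum_mul]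
  congr 1
  refine Finset.sum_congr rfl fun k hk => ?_
  rw [Matrix.transpose_smul, smul_mul_assoc, smul_mul_assoc, mul_smul_comm, smul_mul_assoc,
    pow_transpose_Delta h2 (Nat.lt_succ_iff.1 (Finset.mem_range.1 hk))]

lemma solve_B {m : ℕ} {μ : ℂ} (hμ : μ = (-1) ^ (m + 1)) (h2 : μ * μ = 1) (hm : μ ^ m = 1)
    (B : Matrix (Fin (m + 1)) (Fin (m + 1)) ℂ) :
    B * Jmat (m + 1) μ + Bᵀ = 0 ↔ ∃ α : ℕ → ℂ, B = Delta (m + 1) μ *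
      ∑ l ∈ range ((m + 1 + 1) / 2),
        α l • (Jmat (m + 1) μ ^ l + Jmat (m + 1) μ ^ (m + 1 - 1 - l)) := by
  constructor
  · intro h
    have hB : Bᵀ = -(B * Jmat (m + 1) μ) := eq_neg_of_add_eq_zero_right h
    have hBc : (Jmat (m + 1) μ)ᵀ * B * Jmat (m + 1) μ = B := by
      have := congrArg Matrix.transpose hB
      rw [Matrix.transpose_transpose, Matrix.transpose_neg, Matrix.transpose_mul, hB, mul_neg,
        neg_neg, ← mul_assoc] at this
      exact this.symm
    obtain ⟨q, hq⟩ := exists_poly_row μ (fun j => B (Fin.last m) j)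
    have hQ := poly_commute (n := m + 1) μ (range (m + 1)) q
    set Q := ∑ k ∈ range (m + 1), q k • Jmat (m + 1) μ ^ k with hQdef
    have hBQ : B = Delta (m + 1) μ * Jmat (m + 1) μ * Q := by
      refine sub_eq_zero.1 (eq_zero_of_congr h2 ?_ fun j => ?_)
      · rw [mul_sub, sub_mul, hBc]
        congr 1
        rw [← mul_assoc, ← mul_assoc, Delta_congr h2, mul_assoc, hQ, ← mul_assoc]
      · rw [Matrix.sub_apply, Delta_J_mul_last h2 hm, hq, sub_self]
    obtain ⟨p, hp⟩ := (commute_iff μ (Jmat (m + 1) μ * Q)).1 (by rw [mul_assoc, hQ])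
    rw [mul_assoc, hp] at hBQ
    have hrefl : ∑ k ∈ range (m + 1), p k • Jmat (m + 1) μ ^ (m - k) =
        ∑ k ∈ range (m + 1), p (m - k) • Jmat (m + 1) μ ^ k := by
      rw [← Finset.sum_range_reflect]
      refine Finset.sum_congr rfl fun k hk => ?_
      have := Finset.mem_range.1 hk
      rw [show m + 1 - 1 - k = m - k by omega, show m - (m - k) = k by omega]
    have hpal : ∑ k ∈ range (m + 1), p k • Jmat (m + 1) μ ^ (m - k) =
        ∑ k ∈ range (m + 1), p k • Jmat (m + 1) μ ^ k := by
      have hB' := hB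
      rw [hBQ, transpose_Delta_poly hμ h2 hm, neg_inj, hrefl, mul_assoc, mul_assoc, poly_commute,
        poly_commute, ← mul_assoc, ← mul_assoc] at hB'
      rw [hrefl]
      refine sub_eq_zero.1 (eq_zero_of_commute (μ := μ) ?_ fun j => ?_)
      · rw [sub_mul, mul_sub, poly_commute, poly_commute]
      · have e := Delta_J_mul_last h2 hm (∑ k ∈ range (m + 1), p (m - k) • Jmat (m + 1) μ ^ k -
          ∑ k ∈ range (m + 1), p k • Jmat (m + 1) μ ^ k) j
        rw [mul_sub, hB', sub_self] at e
        exact e.symm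
    obtain ⟨α, hα⟩ := fold_sum (m + 1) (fun k => p k / 2)
      (fun k => Jmat (m + 1) μ ^ k + Jmat (m + 1) μ ^ (m + 1 - 1 - k)) (by
        intro k hk
        rw [show m + 1 - 1 - (m + 1 - 1 - k) = k by omega]
        exact add_comm _ _)
    refine ⟨α, ?_⟩
    rw [hBQ, ← hα]
    congr 1
    simp only [smul_add, Finset.sum_add_distrib, Nat.add_sub_cancel, div_eq_inv_mul, mul_smul]
    rw [← Finset.smul_sum, ← Finset.smul_sum, hpal, ← add_smul]
    norm_num
  · rintro ⟨α, rfl⟩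
    rw [Matrix.transpose_mul, Delta_transpose hμ h2 hm, mul_neg, ← mul_assoc,
      Matrix.transpose_sum, Finset.sum_mul, Finset.sum_mul, Finset.mul_sum, Finset.sum_mul,
      add_neg_eq_zero]
    refine Finset.sum_congr rfl fun k hk => ?_
    have hk := Finset.mem_range.1 hk
    rw [Matrix.transpose_smul, smul_mul_assoc, smul_mul_assoc, mul_smul_comm, smul_mul_assoc,
      Matrix.transpose_add, add_mul, add_mul, pow_transpose_Delta h2 (by omega),
      pow_transpose_Delta h2 (by omega), mul_add, add_mul,
      show m - (m + 1 - 1 - k) = k by omega, Nat.add_sub_cancel]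
    congr 1
    exact add_comm _ _

/-! ### The block equation -/

lemma Rev_mul_apply {n : ℕ} (M : Matrix (Fin n) (Fin n) ℂ) (i j : Fin n) :
    (Rev n * M) i j = M i.rev j := by
  simp [Rev, Matrix.mul_apply]

lemma mul_Rev_apply {n : ℕ} (M : Matrix (Fin n) (Fin n) ℂ) (i j : Fin n) :
    (M * Rev n) i j = M i j.rev := by
  have : ∀ x : Fin n, j = x.rev ↔ x = j.rev := fun x => by rw [eq_comm, Fin.rev_eq_iff]
  simp [Rev, Matrix.mul_apply, this]

lemma Rev_mul_Rev (n : ℕ) : Rev n * Rev n = 1 := by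
  ext i j
  rw [Rev_mul_apply, Matrix.one_apply]
  simp [Rev, eq_comm]

lemma Rev_transpose (n : ℕ) : (Rev n)ᵀ = Rev n := by
  ext i j
  have : i = j.rev ↔ j = i.rev := by rw [eq_comm, Fin.rev_eq_iff]
  simp [Rev, this]

lemma Rev_J_Rev (n : ℕ) (μ : ℂ) : Rev n * Jmat n μ * Rev n = (Jmat n μ)ᵀ := by
  ext i j
  rw [mul_Rev_apply, Rev_mul_apply, Matrix.transpose_apply]
  have h1 : i.rev = j.rev ↔ j = i := by rw [Fin.rev_inj, eq_comm]
  have h2 : (j.rev : ℕ) = (i.rev : ℕ) + 1 ↔ (i : ℕ) = (j : ℕ) + 1 := by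
    rw [Fin.val_rev, Fin.val_rev]; omega
  simp only [Jmat, Matrix.of_apply, h1, h2]

/-- Conjugation by the reversed identity turns the equation for `C` into the one for `B`. -/
lemma C_equation {n : ℕ} (μ : ℂ) (C : Matrix (Fin n) (Fin n) ℂ) :
    C + Jmat n μ * Cᵀ = 0 ↔
      (Rev n * C * Rev n) * Jmat n μ + (Rev n * C * Rev n)ᵀ = 0 := by
  have hR := Rev_mul_Rev n
  have hJ : Rev n * Jmat n μ = (Jmat n μ)ᵀ * Rev n := by
    rw [← Rev_J_Rev, mul_assoc _ (Rev n) (Rev n), hR, mul_one]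
  have key : ((Rev n * C * Rev n) * Jmat n μ + (Rev n * C * Rev n)ᵀ)ᵀ =
      Rev n * (C + Jmat n μ * Cᵀ) * Rev n := by
    simp only [Matrix.transpose_add, Matrix.transpose_mul, Matrix.transpose_transpose,
      Rev_transpose, mul_add, add_mul]
    rw [add_comm, ← mul_assoc (Rev n) (Jmat n μ) Cᵀ, hJ]
    simp only [mul_assoc]
  constructor
  · intro h
    rw [← Matrix.transpose_eq_zero, key, h, mul_zero, zero_mul]
  · intro h
    rw [h, Matrix.transpose_zero] at key
    have := congrArg (fun M => Rev n * M * Rev n) key.symm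
    simpa only [mul_assoc, hR, mul_one, mul_zero, zero_mul, ← mul_assoc (Rev n) (Rev n), one_mul]
      using this

/-- complete description of the solutions of `X·H_{2n}(μ) + H_{2n}(μ)·Xᵀ = 0`
when `μ = (-1)^n`: `X = [[−Dᵀ, B],[C, D]]` with `D` an upper-triangular Toeplitz matrix
`Σ d_k J^k`, `B = Δ_n·Σ_{ℓ<⌈n/2⌉} α_ℓ (J^ℓ + J^(n−1−ℓ))`, and `C = R·(Δ_n·Σ β_ℓ (J^ℓ + J^(n−1−ℓ)))·R`. -/
theorem stmt_17 (n : ℕ) (hn : 1 ≤ n) (μ : ℂ) (hμ : μ = (-1) ^ n)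
    (X : Matrix (Fin n ⊕ Fin n) (Fin n ⊕ Fin n) ℂ) :
    X * Hmat n μ + Hmat n μ * Xᵀ = 0 ↔
      ∃ (d α β : ℕ → ℂ),
        X = Matrix.fromBlocks
          (-(∑ k ∈ Finset.range n, d k • (Jmat n μ) ^ k)ᵀ)
          (Delta n μ *
            ∑ ℓ ∈ Finset.range ((n + 1) / 2),
              α ℓ • ((Jmat n μ) ^ ℓ + (Jmat n μ) ^ (n - 1 - ℓ)))
          (Rev n *
            (Delta n μ *
              ∑ ℓ ∈ Finset.range ((n + 1) / 2),
                β ℓ • ((Jmat n μ) ^ ℓ + (Jmat n μ) ^ (n - 1 - ℓ))) * Rev n)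
          (∑ k ∈ Finset.range n, d k • (Jmat n μ) ^ k) := by
  obtain ⟨m, rfl⟩ : ∃ m, n = m + 1 := ⟨n - 1, by omega⟩
  have h2 : μ * μ = 1 := by rw [hμ, ← pow_add, ← two_mul, pow_mul]; simp
  have hm : μ ^ m = 1 := by
    rw [hμ, ← pow_mul, mul_comm]
    exact (Nat.even_mul_succ_self m).neg_one_pow
  obtain ⟨A, B, C, D, rfl⟩ : ∃ A B C D, X = Matrix.fromBlocks A B C D :=
    ⟨_, _, _, _, (Matrix.fromBlocks_toBlocks X).symm⟩
  have hblock : Matrix.fromBlocks A B C D * Hmat (m + 1) μ +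
      Hmat (m + 1) μ * (Matrix.fromBlocks A B C D)ᵀ = 0 ↔
      B * Jmat (m + 1) μ + Bᵀ = 0 ∧ A + Dᵀ = 0 ∧
        D * Jmat (m + 1) μ + Jmat (m + 1) μ * Aᵀ = 0 ∧ C + Jmat (m + 1) μ * Cᵀ = 0 := by
    rw [Hmat, Matrix.fromBlocks_transpose, Matrix.fromBlocks_multiply, Matrix.fromBlocks_multiply,
      Matrix.fromBlocks_add, ← Matrix.fromBlocks_zero, Matrix.fromBlocks_inj]
    simp
  have hR := Rev_mul_Rev (m + 1)
  rw [hblock, C_equation, solve_B hμ h2 hm, solve_B hμ h2 hm]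
  constructor
  · rintro ⟨⟨α, hα⟩, hA, hD, ⟨β, hβ⟩⟩
    have hA' : A = -Dᵀ := eq_neg_of_add_eq_zero_left hA
    rw [hA', Matrix.transpose_neg, Matrix.transpose_transpose, mul_neg, add_neg_eq_zero,
      commute_iff] at hD
    obtain ⟨d, hd⟩ := hD
    refine ⟨d, α, β, ?_⟩
    rw [← hα, ← hβ, ← hd, ← hA']
    congr 1
    simp only [mul_assoc, hR, mul_one]
    rw [← mul_assoc, hR, one_mul]
  · rintro ⟨d, α, β, h⟩
    obtain ⟨hA, hB, hC, hD⟩ := Matrix.fromBlocks_inj.1 h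
    rw [← hD] at hA
    refine ⟨⟨α, hB⟩, by rw [hA, neg_add_cancel], ?_, ⟨β, ?_⟩⟩
    · rw [hA, Matrix.transpose_neg, Matrix.transpose_transpose, mul_neg, add_neg_eq_zero,
        commute_iff]
      exact ⟨d, hD⟩
    · rw [hC]
      simp only [mul_assoc, hR, mul_one]
      rw [← mul_assoc, hR, one_mul]
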